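/- There is an injective homomorphism of real Lie algebras from 𝔰𝔬(2,3) into 𝔰𝔩(4,ℝ) whose image is a maximal Lie subalgebra of 𝔰𝔩(4,ℝ), and this image is an S-subalgebra (its complexification is contained in no proper regular subalgebra of 𝔰𝔩(4,ℂ)). -/

import Mathlib

/-!
STATEMENT 19: There is an injective homomorphism of real Lie algebras from 𝔰𝔬(2,3) into
𝔰𝔩(4,ℝ) whose image is a maximal Lie subalgebra of 𝔰𝔩(4,ℝ), and this image is an
S-subalgebra: its complexification is contained in no proper regular subalgebra of 𝔰𝔩(4,ℂ).
-/

open LieAlgebra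

/-- A Lie subalgebra is *regular* if it is normalized by some Cartan subalgebra. -/
def LieSubalgebra.IsRegularSubalgebra {K L : Type*} [Field K] [LieRing L] [LieAlgebra K L]
    (r : LieSubalgebra K L) : Prop :=
  ∃ H : LieSubalgebra K L, H.IsCartanSubalgebra ∧ ∀ x ∈ H, ∀ y ∈ r, ⁅x, y⁆ ∈ r

/-- A maximal Lie subalgebra: a proper subalgebra not properly contained in any other proper
subalgebra. -/
def IsMaxSubalgebra {K L : Type*} [Field K] [LieRing L] [LieAlgebra K L]
    (m : LieSubalgebra K L) : Prop :=
  m ≠ ⊤ ∧ ∀ s : LieSubalgebra K L, s ≠ ⊤ → m ≤ s → s = m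

/-- The complexification, inside 𝔰𝔩(4,ℂ), of the image of a morphism into 𝔰𝔩(4,ℝ). -/
noncomputable def complexifiedRange
    (φ : ↥(Orthogonal.so' (Fin 2) (Fin 3) ℝ) →ₗ⁅ℝ⁆ ↥(SpecialLinear.sl (Fin 4) ℝ)) :
    LieSubalgebra ℂ ↥(SpecialLinear.sl (Fin 4) ℂ) :=
  LieSubalgebra.lieSpan ℂ _
    {x : ↥(SpecialLinear.sl (Fin 4) ℂ) | ∃ A : ↥(Orthogonal.so' (Fin 2) (Fin 3) ℝ),
      ((φ A : Matrix (Fin 4) (Fin 4) ℝ)).map (Complex.ofReal : ℝ → ℂ) =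
        (x : Matrix (Fin 4) (Fin 4) ℂ)}

/-!
The homomorphism is the spin representation. Choose five anticommuting real `4 × 4` matrices `γ_i`
with `γ_i ^ 2 = ±1` in signature `(2,3)`. The brackets `⁅γ_i, γ_j⁆` span a copy of `𝔰𝔬(2,3)`, which acts
on the span `V` of the `γ_k` as the five-dimensional vector representation, and over any field of
characteristic zero `𝔰𝔩(4) = 𝔰𝔬(2,3) ⊕ V`, orthogonally for the trace form (`decomp`), so that
lying in `𝔰𝔬(2,3)` amounts to `T (G k) x = 0` for all `k`.

Because `V` is irreducible, a subalgebra of `𝔰𝔩(4)` containing `𝔰𝔬(2,3)` properly is everything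
(`eq_top_of_T_ne_zero`). Over `ℝ` this is maximality. Over `ℂ` it shows that a proper subalgebra
`r` containing the complexified image is equal to it. If `r` were normalized by a Cartan subalgebra
`H` of `𝔰𝔩(4,ℂ)`, then `H ≤ r`, since `r` is its own normalizer (`T_G_eq_zero_of_normalizes`). But each
element of `r` acts on `V` by a matrix that is skew for a nondegenerate symmetric form in odd
dimension, hence singular (`exists_lie_eq_zero`), so zero is a weight of `H` on `V`. A vector of that
weight lies in the zero root space of `H`, which is `H` itself and meets `V` trivially
(`not_cartan`). This is the contradiction `rank 𝔰𝔬(5) = 2 < 3 = rank 𝔰𝔩(4)` without computing ranks.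
-/

namespace SpinSO23

open Matrix LieAlgebra

/-! ### Gamma matrices -/

/-- The index set of `Orthogonal.so' (Fin 2) (Fin 3) ℝ`: two directions followed by three of the
opposite sign. -/
abbrev SoIdx : Type := Fin 2 ⊕ Fin 3

/-- Five pairwise anticommuting integer matrices `γ_i` with `γ_i ^ 2 = sgn i`, i.e. the Clifford
relations in signature `(2,3)`, realised by real `4 × 4` matrices. -/
def gammaZ : SoIdx → Matrix (Fin 4) (Fin 4) ℤ :=
  Sum.elim
    ![!![0, 1, 0, 0; -1, 0, 0, 0; 0, 0, 0, -1; 0, 0, 1, 0],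
      !![0, 0, 1, 0; 0, 0, 0, 1; -1, 0, 0, 0; 0, -1, 0, 0]]
    ![!![0, 1, 0, 0; 1, 0, 0, 0; 0, 0, 0, -1; 0, 0, -1, 0],
      !![1, 0, 0, 0; 0, -1, 0, 0; 0, 0, -1, 0; 0, 0, 0, 1],
      !![0, 0, 1, 0; 0, 0, 0, 1; 1, 0, 0, 0; 0, 1, 0, 0]]

/-- The square of `γ_i`. The form is normalised to be negative on the first two directions, which
is the negative of `Orthogonal.indefiniteDiagonal`; both forms have the same skew-adjoint matrices. -/
def sgn : SoIdx → ℤ := Sum.elim (fun _ => -1) (fun _ => 1)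

/-- The entries of the diagonal form with diagonal `sgn`. -/
def eta (i j : SoIdx) : ℤ := if i = j then sgn i else 0

theorem traceZ : ∀ i, (gammaZ i).trace = 0 := by decide +kernel
/-- The vector representation: `⁅γ_i, γ_j⁆` acts on the span of the `γ_k` as an infinitesimal
rotation. -/
theorem lieZ : ∀ i j k, ⁅⁅gammaZ i, gammaZ j⁆, gammaZ k⁆ = (4 * eta j k) • gammaZ i - (4 * eta i k) • gammaZ j := by decide +kernel
theorem trace2Z : ∀ i j, (gammaZ i * gammaZ j).trace = 4 * eta i j := by decide +kernel
theorem trace3Z : ∀ k i j, (gammaZ k * ⁅gammaZ i, gammaZ j⁆).trace = 0 := by decide +kernel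

/-- The Fierz completeness relation for `1`, `γ_k` and `⁅γ_i, γ_j⁆`, which together span all
`4 × 4` matrices; it encodes the expansion of the matrix unit `single d c 1`. -/
theorem fierz : ∀ a b c d : Fin 4,
   8 * ∑ k, sgn k * gammaZ k c d * gammaZ k a b
     - ∑ i, ∑ j, sgn i * sgn j * ⁅gammaZ i, gammaZ j⁆ c d * ⁅gammaZ i, gammaZ j⁆ a b
     + (if c = d then 8 else 0) * (if a = b then 1 else 0) = if d = a ∧ c = b then 32 else 0 := by decide +kernel

variable (K : Type*) [Field K]
/-- The matrix `γ_i` over a field `K`. -/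
noncomputable def gm (i : SoIdx) : Matrix (Fin 4) (Fin 4) K := (gammaZ i).map (Int.cast : ℤ → K)

theorem lie_gm (i j : SoIdx) : ⁅gm K i, gm K j⁆ = (⁅gammaZ i, gammaZ j⁆).map (Int.cast : ℤ → K) := by
  have h : ∀ i, gm K i = (Int.castRingHom K).mapMatrix (gammaZ i) := fun i => rfl
  change _ = (Int.castRingHom K).mapMatrix _
  rw [h, h, Ring.lie_def, Ring.lie_def, map_sub, map_mul, map_mul]

/-- `fierz` extended linearly to arbitrary matrices. -/
theorem decomp_aux (x : Matrix (Fin 4) (Fin 4) K) :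
   (8 : K) • ∑ k, ((sgn k : K) * (gm K k * x).trace) • gm K k
     - ∑ i, ∑ j, ((sgn i : K) * (sgn j : K) * (⁅gm K i, gm K j⁆ * x).trace) • ⁅gm K i, gm K j⁆
     + (8 * x.trace) • (1 : Matrix (Fin 4) (Fin 4) K) = (32 : K) • x := by
  induction x using Matrix.induction_on' with
  | h_zero => simp
  | h_add p q hp hq =>
    rw [smul_add, ← hp, ← hq]
    simp only [mul_add, Matrix.trace_add, add_smul, Finset.sum_add_distrib, smul_add]
    abel
  | h_std_basis d c t =>
    ext a b
    have h := congrArg (fun z : ℤ => (z : K) * t) (fierz a b c d)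
    simp only [lie_gm]
    simp only [Matrix.add_apply, Matrix.sub_apply, Matrix.smul_apply, Matrix.sum_apply, smul_eq_mul,
      Matrix.trace_mul_single, op_smul_eq_mul, gm, Matrix.map_apply, Matrix.one_apply, Matrix.single_apply]
    push_cast at h
    have h1 : (8 : K) * ∑ k, (sgn k : K) * ((gammaZ k c d : K) * t) * (gammaZ k a b : K)
        = 8 * (∑ k, (sgn k : K) * (gammaZ k c d : K) * (gammaZ k a b : K)) * t := by
      rw [mul_assoc, Finset.sum_mul]
      exact congrArg _ (Finset.sum_congr rfl fun k _ => by ring)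
    have h2 : ∑ i, ∑ j, (sgn i : K) * (sgn j : K) * ((⁅gammaZ i, gammaZ j⁆ c d : ℤ) * t)
          * ((⁅gammaZ i, gammaZ j⁆ a b : ℤ) : K)
        = (∑ i, ∑ j, (sgn i : K) * (sgn j : K) * (⁅gammaZ i, gammaZ j⁆ c d : ℤ)
          * ((⁅gammaZ i, gammaZ j⁆ a b : ℤ) : K)) * t := by
      simp only [Finset.sum_mul]
      exact Finset.sum_congr rfl fun i _ => Finset.sum_congr rfl fun j _ => by ring
    have h3 : (Matrix.single d c t).trace = if c = d then t else 0 := by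
      split_ifs with hcd
      · subst hcd; exact Matrix.trace_single_eq_same _ _
      · exact Matrix.trace_single_eq_of_ne _ _ _ (Ne.symm hcd)
    rw [h3, h1, h2]
    split_ifs at h ⊢ <;> linear_combination h

/-! ### The splitting of `𝔰𝔩(4)` under the spin representation -/

/-- The Lie algebra `𝔰𝔩(4, K)`. -/
abbrev SL4 : Type _ := ↥(SpecialLinear.sl (Fin 4) K)

theorem trace_coe (x : SL4 K) : (x : Matrix (Fin 4) (Fin 4) K).trace = 0 := x.2

/-- The traceless matrix `γ_i` as an element of `𝔰𝔩(4, K)`. -/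
noncomputable def G (i : SoIdx) : SL4 K := ⟨gm K i, by
  have h := congrArg (Int.cast : ℤ → K) (traceZ i)
  rw [Int.cast_zero] at h
  exact (AddMonoidHom.map_trace (Int.castAddHom K) (gammaZ i)).symm.trans h⟩

/-- The trace form `(x, y) ↦ tr (x y)` on `𝔰𝔩(4, K)`, proportional to the Killing form. -/
noncomputable def T : SL4 K →ₗ[K] SL4 K →ₗ[K] K :=
  LinearMap.mk₂ K (fun x y => ((x : Matrix (Fin 4) (Fin 4) K) * (y : Matrix (Fin 4) (Fin 4) K)).trace)
    (fun x y z => by simp [add_mul]) (fun c x y => by simp)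
    (fun x y z => by simp [mul_add]) (fun c x y => by simp)

variable {K}

theorem T_apply (x y : SL4 K) : T K x y = ((x : Matrix (Fin 4) (Fin 4) K) * (y : Matrix (Fin 4) (Fin 4) K)).trace := rfl

theorem T_comm (x y : SL4 K) : T K x y = T K y x := by
  rw [T_apply, T_apply, Matrix.trace_mul_comm]

theorem T_lie (x y z : SL4 K) : T K ⁅x, y⁆ z = T K x ⁅y, z⁆ := by
  simp only [T_apply, SpecialLinear.sl_bracket, sub_mul, mul_sub, Matrix.trace_sub, mul_assoc]
  rw [← mul_assoc (x : Matrix (Fin 4) (Fin 4) K) z y, Matrix.trace_mul_comm _ (y : Matrix (Fin 4) (Fin 4) K)]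

theorem coe_lie_G (i j : SoIdx) : ((⁅G K i, G K j⁆ : SL4 K) : Matrix (Fin 4) (Fin 4) K) =
    (⁅gammaZ i, gammaZ j⁆).map (Int.cast : ℤ → K) := lie_gm K i j

theorem trace_cast (M : Matrix (Fin 4) (Fin 4) ℤ) : (M.map (Int.cast : ℤ → K)).trace = (M.trace : K) :=
  (AddMonoidHom.map_trace (Int.castAddHom K) M).symm

theorem mul_cast (M N : Matrix (Fin 4) (Fin 4) ℤ) :
    M.map (Int.cast : ℤ → K) * N.map (Int.cast : ℤ → K) = (M * N).map (Int.cast : ℤ → K) :=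
  ((Int.castRingHom K).mapMatrix.map_mul M N).symm

theorem lie_lie_G (i j k : SoIdx) :
    ⁅⁅G K i, G K j⁆, G K k⁆ = (4 * eta j k : K) • G K i - (4 * eta i k : K) • G K j := by
  apply Subtype.ext
  rw [SpecialLinear.sl_bracket, coe_lie_G]
  change _ * (gammaZ k).map _ - (gammaZ k).map _ * _ = (4 * eta j k : K) • (gammaZ i).map _ - (4 * eta i k : K) • (gammaZ j).map _
  rw [mul_cast, mul_cast]
  ext a b
  have h := congrArg (Int.cast : ℤ → K) (congrFun (congrFun (lieZ i j k) a) b)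
  simp only [Ring.lie_def (⁅gammaZ i, gammaZ j⁆), Matrix.sub_apply, Matrix.smul_apply, smul_eq_mul] at h
  push_cast at h
  exact h

theorem T_G_G (i j : SoIdx) : T K (G K i) (G K j) = 4 * eta i j := by
  rw [T_apply]
  change Matrix.trace ((gammaZ i).map _ * (gammaZ j).map _) = _
  rw [mul_cast, trace_cast, trace2Z]
  push_cast; rfl

/-- The two summands of `decomp` are orthogonal. -/
theorem T_G_lie (k i j : SoIdx) : T K (G K k) ⁅G K i, G K j⁆ = 0 := by
  rw [T_apply, coe_lie_G]
  change Matrix.trace ((gammaZ k).map _ * _) = _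
  rw [mul_cast, trace_cast, trace3Z, Int.cast_zero]

/-- The splitting of `𝔰𝔩(4)` into the span of the `γ_k` and the span of the `⁅γ_i, γ_j⁆`, with the
coordinates given by the trace form. -/
theorem decomp (x : SL4 K) :
    (32 : K) • x = (8 : K) • ∑ k, ((sgn k : K) * T K (G K k) x) • G K k
     - ∑ i, ∑ j, ((sgn i : K) * (sgn j : K) * T K ⁅G K i, G K j⁆ x) • ⁅G K i, G K j⁆ := by
  apply Subtype.ext
  have h := decomp_aux K x
  rw [trace_coe, mul_zero, zero_smul, add_zero] at h
  simp only [AddSubgroupClass.coe_sub, SetLike.val_smul, AddSubmonoidClass.coe_finsetSum]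
  exact h.symm

theorem sgn_mul_sgn (i : SoIdx) : (sgn i : K) * sgn i = 1 := by
  have : sgn i * sgn i = 1 := by revert i; decide
  rw [← Int.cast_mul, this, Int.cast_one]

theorem exists_ne2 : ∀ i j : SoIdx, ∃ k, k ≠ i ∧ k ≠ j := by decide

theorem T_G_sum (c : SoIdx → K) (k : SoIdx) : T K (G K k) (∑ i, c i • G K i) = 4 * (sgn k * c k) := by
  simp only [map_sum, map_smul, T_G_G, eta, smul_eq_mul, Int.cast_ite, Int.cast_zero, mul_ite, mul_zero,
    Finset.sum_ite_eq, Finset.mem_univ, if_true]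
  ring

theorem T_lie' (x y z : SL4 K) : T K x ⁅y, z⁆ = -T K ⁅x, z⁆ y := by
  rw [T_lie, ← lie_skew y z, map_neg]

theorem lie_lie_sum (a : SoIdx → K) (j k : SoIdx) :
    ⁅⁅G K j, G K k⁆, ∑ m, ((sgn m : K) * a m) • G K m⁆ = (4 * a k) • G K j - (4 * a j) • G K k := by
  have h : ∀ i m : SoIdx, (sgn m : K) * a m * (4 * eta i m) = if i = m then 4 * a m else 0 := by
    intro i m
    unfold eta
    split_ifs with him
    · subst him; linear_combination 4 * a i * sgn_mul_sgn (K := K) i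
    · simp
  simp only [lie_sum, lie_smul, lie_lie_G, smul_sub, smul_smul, h, Finset.sum_sub_distrib, ite_smul,
    zero_smul, Finset.sum_ite_eq, Finset.mem_univ, if_true]

variable [CharZero K]

theorem eq_zero_of_T {x : SL4 K} (h1 : ∀ k, T K (G K k) x = 0) (h2 : ∀ i j, T K ⁅G K i, G K j⁆ x = 0) :
    x = 0 := by
  have h := decomp x
  simp only [h1, h2, mul_zero, zero_smul, Finset.sum_const_zero, smul_zero, sub_zero] at h
  exact (smul_eq_zero.mp h).resolve_left (by norm_num)

theorem eq_zero_of_sum {c : SoIdx → K} (h : ∑ i, c i • G K i = 0) : c = 0 := by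
  ext k
  have h1 := T_G_sum c k
  rw [h, map_zero] at h1
  have h2 := sgn_mul_sgn (K := K) k
  simp only [Pi.zero_apply]
  linear_combination (-(c k)) * h2 - (sgn k / 4 : K) * h1

/-- The action of `𝔰𝔩(4)` on the `γ_k` by brackets is faithful, since they generate `𝔰𝔩(4)`,
whose centre is trivial. -/
theorem eq_zero_of_lie_G {x : SL4 K} (h : ∀ k, ⁅x, G K k⁆ = 0) : x = 0 := by
  have h' : ∀ k, ⁅G K k, x⁆ = 0 := fun k => by rw [← lie_skew, h, neg_zero]
  refine eq_zero_of_T (fun k => ?_) fun i j => by rw [T_lie, h', map_zero]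
  obtain ⟨j, hj, -⟩ := exists_ne2 k k
  have h1 : T K ⁅⁅G K k, G K j⁆, G K j⁆ x = 0 := by rw [T_lie, h', map_zero]
  rw [lie_lie_G] at h1
  have h2 := sgn_mul_sgn (K := K) j
  simp only [eta, if_true, hj.symm, if_false, Int.cast_zero, mul_zero, zero_smul, sub_zero, map_smul,
    LinearMap.smul_apply, smul_eq_mul] at h1
  linear_combination (-(T K (G K k) x)) * h2 + (sgn j / 4 : K) * h1

/-- The irreducibility argument: a subalgebra containing the span of the `⁅γ_i, γ_j⁆` and one element
outside it is everything. Subtracting from `x` its component in that span leaves a nonzero vector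
`v`, and two infinitesimal rotations turn `v` into a multiple of a single `γ_l`. -/
theorem eq_top_of_T_ne_zero {s : LieSubalgebra K (SL4 K)} (hs : ∀ i j, ⁅G K i, G K j⁆ ∈ s) {x : SL4 K}
    (hx : x ∈ s) {k : SoIdx} (hk : T K (G K k) x ≠ 0) : s = ⊤ := by
  have four : (4 : K) ≠ 0 := by norm_num
  have sne : ∀ i : SoIdx, (sgn i : K) ≠ 0 := fun i h => by
    have := sgn_mul_sgn (K := K) i
    rw [h] at this; simp at this
  have hv : ∑ m, ((sgn m : K) * T K (G K m) x) • G K m ∈ s := by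
    have h8 : (8 : K) • ∑ m, ((sgn m : K) * T K (G K m) x) • G K m ∈ s := by
      rw [sub_eq_iff_eq_add.mp (decomp x).symm]
      exact add_mem (s.smul_mem _ hx)
        (sum_mem fun i _ => sum_mem fun j _ => s.smul_mem _ (hs i j))
    have := s.smul_mem (8⁻¹ : K) h8
    rwa [smul_smul, inv_mul_cancel₀ (by norm_num), one_smul] at this
  have hl : ∀ l, l ≠ k → G K l ∈ s := by
    intro l hlk
    obtain ⟨j, hjl, hjk⟩ := exists_ne2 l k
    -- `⁅γ_j, γ_k⁆` maps `v` into the plane of `γ_j`, `γ_k`, with `γ_j`-coefficient `4 T(γ_k, x) ≠ 0`;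
    -- then `⁅γ_l, γ_j⁆` kills `γ_k` and sends `γ_j` to a multiple of `γ_l`.
    have h1 := s.lie_mem (hs l j) (s.lie_mem (hs j k) hv)
    rw [lie_lie_sum] at h1
    simp only [lie_sub, lie_smul, lie_lie_G, eta, hlk, hjk, hjl.symm, if_true, if_false, Int.cast_zero, mul_zero,
      zero_smul, sub_zero, smul_zero, smul_smul] at h1
    have h2 := s.smul_mem (4 * T K (G K k) x * (4 * (sgn j : K)))⁻¹ h1
    rwa [smul_smul, inv_mul_cancel₀ (by simp [four, sne, hk]), one_smul] at h2
  have hG : ∀ l, G K l ∈ s := by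
    intro l
    -- The index `k` itself is reached from any other `γ_j` by rotating with `⁅γ_k, γ_j⁆`.
    by_cases hlk : l = k
    · obtain ⟨j, hjk, -⟩ := exists_ne2 k k
      have h1 := s.lie_mem (hs k j) (hl j hjk)
      simp only [lie_lie_G, eta, hjk.symm, if_true, if_false, Int.cast_zero, mul_zero,
        zero_smul, sub_zero] at h1
      have h2 := s.smul_mem (4 * (sgn j : K))⁻¹ h1
      rw [smul_smul, inv_mul_cancel₀ (by simp [sne]), one_smul] at h2
      rwa [hlk]
    · exact hl l hlk
  rw [eq_top_iff]
  intro y _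
  have h32 : (32 : K) • y ∈ s := by
    rw [decomp]
    exact sub_mem (s.smul_mem _ (sum_mem fun i _ => s.smul_mem _ (hG i)))
      (sum_mem fun i _ => sum_mem fun j _ => s.smul_mem _ (hs i j))
  have := s.smul_mem (32⁻¹ : K) h32
  rwa [smul_smul, inv_mul_cancel₀ (by norm_num), one_smul] at this

/-! ### The spin representation of `𝔰𝔬(2,3)` -/

/-- The Lie algebra `𝔰𝔬(2,3)`. -/
abbrev So23 : Type := ↥(Orthogonal.so' (Fin 2) (Fin 3) ℝ)

/-- Skew-adjointness of a matrix, entry by entry. -/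
theorem mem_so' {A : Matrix SoIdx SoIdx ℝ} :
    A ∈ Orthogonal.so' (Fin 2) (Fin 3) ℝ ↔ ∀ i j, A j i * sgn j = -(sgn i * A i j) := by
  have hJ : Orthogonal.indefiniteDiagonal (Fin 2) (Fin 3) ℝ = Matrix.diagonal fun i => -(sgn i : ℝ) := by
    unfold Orthogonal.indefiniteDiagonal
    congr 1
    ext i
    rcases i with i | i <;> simp [sgn]
  unfold Orthogonal.so'
  rw [mem_skewAdjointMatricesLieSubalgebra, mem_skewAdjointMatricesSubmodule, hJ,
    Matrix.IsSkewAdjoint, Matrix.IsAdjointPair, ← Matrix.ext_iff]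
  refine forall_congr' fun i => forall_congr' fun j => ?_
  rw [Matrix.mul_diagonal, Matrix.diagonal_mul, Matrix.transpose_apply, Matrix.neg_apply]
  constructor <;> intro h <;> linear_combination -h

/-- The underlying linear map of the spin representation, `A ↦ ⅛ ∑ A_ij sgn_j ⁅γ_i, γ_j⁆`. -/
noncomputable def rho : So23 →ₗ[ℝ] SL4 ℝ where
  toFun A := (8⁻¹ : ℝ) • ∑ i, ∑ j, ((A : Matrix SoIdx SoIdx ℝ) i j * sgn j) • ⁅G ℝ i, G ℝ j⁆
  map_add' A B := by
    change (8⁻¹ : ℝ) • ∑ i, ∑ j, (((A : Matrix SoIdx SoIdx ℝ) + (B : Matrix SoIdx SoIdx ℝ)) i j * sgn j) • ⁅G ℝ i, G ℝ j⁆ = _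
    simp only [Matrix.add_apply, add_mul, add_smul, Finset.sum_add_distrib, smul_add]
  map_smul' c A := by
    change (8⁻¹ : ℝ) • ∑ i, ∑ j, ((c • (A : Matrix SoIdx SoIdx ℝ)) i j * sgn j) • ⁅G ℝ i, G ℝ j⁆ = _
    simp only [Matrix.smul_apply, smul_eq_mul, mul_assoc, mul_smul,
      ← Finset.smul_sum, RingHom.id_apply]
    rw [smul_comm]

theorem rho_apply (A : So23) : rho A =
  (8⁻¹ : ℝ) • ∑ i, ∑ j, ((A : Matrix SoIdx SoIdx ℝ) i j * sgn j) • ⁅G ℝ i, G ℝ j⁆ := rfl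

/-- The equivariance that characterises `rho`: bracketing with `rho A` acts on the `γ_k` through
the matrix `A`. -/
theorem rho_lie_G (A : So23) (k : SoIdx) :
    ⁅rho A, G ℝ k⁆ = ∑ i, (A : Matrix SoIdx SoIdx ℝ) i k • G ℝ i := by
  obtain ⟨A, hA⟩ := A
  have hA' := mem_so'.mp hA
  have h1 : ∀ i j, A i j * sgn j * (4 * eta j k : ℝ) = if j = k then 4 * A i j else 0 := by
    intro i j
    unfold eta
    split_ifs with h
    · linear_combination 4 * A i j * sgn_mul_sgn (K := ℝ) j
    · simp
  have h2 : ∀ i j, A i j * sgn j * (4 * eta i k : ℝ) = if i = k then -(4 * A j i) else 0 := by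
    intro i j
    unfold eta
    split_ifs with h
    · subst h; linear_combination -4 * A j i * sgn_mul_sgn (K := ℝ) j + 4 * sgn j * hA' i j
    · simp
  rw [rho_apply]
  simp only [smul_lie, sum_lie, lie_lie_G, smul_sub, smul_smul, h1, h2, Finset.sum_sub_distrib,
    ite_smul, zero_smul, Finset.sum_ite_eq', Finset.mem_univ, if_true]
  rw [Finset.sum_comm]
  simp only [Finset.sum_ite_eq', Finset.mem_univ, if_true, neg_smul, Finset.sum_neg_distrib,
    mul_smul, ← Finset.smul_sum]
  module

theorem ext_lie_G {x y : SL4 ℝ} (h : ∀ k, ⁅x, G ℝ k⁆ = ⁅y, G ℝ k⁆) : x = y :=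
  sub_eq_zero.mp (eq_zero_of_lie_G fun k => by rw [sub_lie, h, sub_self])

/-- The spin representation `𝔰𝔬(2,3) → 𝔰𝔩(4,ℝ)`. It respects brackets because both sides act on the
`γ_k` in the same way, and that action is faithful. -/
noncomputable def spin : So23 →ₗ⁅ℝ⁆ SL4 ℝ :=
  { rho with
    map_lie' := by
      intro A B
      refine ext_lie_G fun k => ?_
      change ⁅rho ⁅A, B⁆, G ℝ k⁆ = ⁅⁅rho A, rho B⁆, G ℝ k⁆
      rw [lie_lie (rho A) (rho B)]
      simp only [rho_lie_G, lie_sum, lie_smul, Finset.smul_sum, smul_smul]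
      rw [Finset.sum_comm, Finset.sum_comm (γ := SoIdx) (f := fun x i => ((A : Matrix SoIdx SoIdx ℝ) x k * _) • _)]
      simp only [← Finset.sum_smul, ← Finset.sum_sub_distrib, ← sub_smul]
      refine Finset.sum_congr rfl fun i _ => ?_
      congr 1
      change ((A : Matrix SoIdx SoIdx ℝ) * (B : Matrix SoIdx SoIdx ℝ)
        - (B : Matrix SoIdx SoIdx ℝ) * (A : Matrix SoIdx SoIdx ℝ)) i k = _
      rw [Matrix.sub_apply, Matrix.mul_apply, Matrix.mul_apply, ← Finset.sum_sub_distrib]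
      exact Finset.sum_congr rfl fun j _ => by ring }

theorem spin_lie_G (A : So23) (k : SoIdx) :
    ⁅spin A, G ℝ k⁆ = ∑ i, (A : Matrix SoIdx SoIdx ℝ) i k • G ℝ i := rho_lie_G A k

theorem spin_injective : Function.Injective spin := by
  rw [injective_iff_map_eq_zero]
  intro A hA
  apply Subtype.ext
  ext i k
  have h := spin_lie_G A k
  rw [hA, zero_lie] at h
  exact congrFun (eq_zero_of_sum h.symm) i

theorem lie_mem_range (i j : SoIdx) : ⁅G ℝ i, G ℝ j⁆ ∈ spin.range := by
  let A : Matrix SoIdx SoIdx ℝ := Matrix.of fun a b =>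
    (if a = i then (4 * eta j b : ℝ) else 0) - (if a = j then (4 * eta i b : ℝ) else 0)
  have hA : A ∈ Orthogonal.so' (Fin 2) (Fin 3) ℝ := by
    rw [mem_so']
    intro a b
    simp only [A, Matrix.of_apply, eta, Int.cast_ite, Int.cast_zero, eq_comm (a := i), eq_comm (a := j)]
    by_cases h1 : a = i <;> by_cases h2 : a = j <;> by_cases h3 : b = i <;> by_cases h4 : b = j <;>
      simp only [h1, h2, h3, h4, if_true, if_false] <;> (try subst_vars) <;> simp_all <;> ring
  refine (LieHom.mem_range _ _).mpr ⟨⟨A, hA⟩, ext_lie_G fun k => ?_⟩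
  rw [spin_lie_G, lie_lie_G]
  simp [A, sub_smul, ite_smul, Finset.sum_sub_distrib, -Fintype.sum_sum_type]

theorem T_G_spin (k : SoIdx) (A : So23) : T ℝ (G ℝ k) (spin A) = 0 := by
  change T ℝ (G ℝ k) (rho A) = 0
  simp only [rho_apply, map_smul, map_sum, T_G_lie, smul_zero, Finset.sum_const_zero]

/-! ### Maximality -/

theorem isMax_range : IsMaxSubalgebra spin.range := by
  constructor
  · intro h
    have h1 : G ℝ (Sum.inl 0) ∈ spin.range := h ▸ LieSubalgebra.mem_top _
    obtain ⟨A, hA⟩ := (LieHom.mem_range _ _).mp h1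
    have h2 := T_G_spin (Sum.inl 0) A
    rw [hA, T_G_G] at h2
    norm_num [eta, sgn] at h2
  · intro s hs hle
    refine le_antisymm (fun x hx => ?_) hle
    have hR : ∀ k, T ℝ (G ℝ k) x = 0 := fun k => by
      by_contra hk
      exact hs (eq_top_of_T_ne_zero (fun i j => hle (lie_mem_range i j)) hx hk)
    have h32 : (32 : ℝ) • x ∈ spin.range := by
      rw [decomp]
      simp only [hR, mul_zero, zero_smul, Finset.sum_const_zero, smul_zero, zero_sub]
      exact neg_mem (sum_mem fun i _ => sum_mem fun j _ => spin.range.smul_mem _ (lie_mem_range i j))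
    have := spin.range.smul_mem (32⁻¹ : ℝ) h32
    rwa [smul_smul, inv_mul_cancel₀ (by norm_num), one_smul] at this

/-! ### The complexification and Cartan subalgebras -/

theorem lie_mem_complexifiedRange (i j : SoIdx) : ⁅G ℂ i, G ℂ j⁆ ∈ complexifiedRange spin := by
  obtain ⟨A, hA⟩ := (LieHom.mem_range _ _).mp (lie_mem_range i j)
  refine LieSubalgebra.subset_lieSpan ⟨A, ?_⟩
  rw [hA, coe_lie_G, coe_lie_G]
  ext a b
  simp

/-- Elements orthogonal to the `γ_k` preserve the span of the `γ_l`, which is the orthogonal of the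
`⁅γ_i, γ_j⁆`. -/
theorem T_lie_G_lie_sum {h : SL4 ℂ} (hh : ∀ k, T ℂ (G ℂ k) h = 0) (w : SoIdx → ℂ) (i j : SoIdx) :
    T ℂ ⁅G ℂ i, G ℂ j⁆ ⁅h, ∑ l, w l • G ℂ l⁆ = 0 := by
  rw [T_lie']
  simp only [lie_sum, lie_smul, lie_lie_G, map_sum, map_smul, map_sub, LinearMap.smul_apply,
    LinearMap.sub_apply, LinearMap.sum_apply, hh, smul_zero, sub_zero, Finset.sum_const_zero, neg_zero]

/-- An element orthogonal to all `⁅γ_i, γ_j⁆` is a combination of the `γ_l`. -/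
theorem exists_eq_sum {x : SL4 ℂ} (hx : ∀ i j, T ℂ ⁅G ℂ i, G ℂ j⁆ x = 0) :
    ∃ w : SoIdx → ℂ, x = ∑ l, w l • G ℂ l := by
  refine ⟨fun l => 4⁻¹ * (sgn l * T ℂ (G ℂ l) x), ?_⟩
  have h := decomp x
  simp only [hx, mul_zero, zero_smul, Finset.sum_const_zero, sub_zero] at h
  calc x = (32⁻¹ : ℂ) • ((32 : ℂ) • x) := by
        rw [smul_smul, inv_mul_cancel₀ (by norm_num), one_smul]
    _ = _ := by
        rw [h, smul_smul, Finset.smul_sum]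
        refine Finset.sum_congr rfl fun l _ => ?_
        rw [smul_smul]
        congr 1
        ring

/-- Every element of the complexified `𝔰𝔬(2,3)` kills a nonzero vector of the five-dimensional
representation, since a skew-symmetric matrix of odd size is singular. -/
theorem exists_lie_eq_zero {h : SL4 ℂ} (hh : ∀ k, T ℂ (G ℂ k) h = 0) :
    ∃ w : SoIdx → ℂ, w ≠ 0 ∧ ⁅h, ∑ l, w l • G ℂ l⁆ = 0 := by
  let B : Matrix SoIdx SoIdx ℂ := Matrix.of fun k l => T ℂ (G ℂ k) ⁅h, G ℂ l⁆
  have hB : Bᵀ = -B := by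
    ext k l
    simp only [B, Matrix.transpose_apply, Matrix.neg_apply, Matrix.of_apply]
    rw [← T_lie, T_comm, ← lie_skew, map_neg]
  have hdet : B.det = 0 := by
    have h1 := congrArg Matrix.det hB
    rw [Matrix.det_transpose, Matrix.det_neg] at h1
    norm_num at h1
    linear_combination h1 / 2
  obtain ⟨w, hw, hBw⟩ := Matrix.exists_mulVec_eq_zero_iff.mpr hdet
  refine ⟨w, hw, eq_zero_of_T (fun k => ?_) fun i j => ?_⟩
  · have := congrFun hBw k
    simp only [Matrix.mulVec, dotProduct, B, Matrix.of_apply, Pi.zero_apply] at this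
    simp only [lie_sum, lie_smul, map_sum, map_smul, smul_eq_mul]
    rw [← this]
    exact Finset.sum_congr rfl fun l _ => mul_comm _ _
  · exact T_lie_G_lie_sum hh w i j

/-- A subalgebra `r` lying in the span of the `⁅γ_i, γ_j⁆`, and containing them all, is its own
normalizer. -/
theorem T_G_eq_zero_of_normalizes {r : LieSubalgebra ℂ (SL4 ℂ)} (hr : ∀ x ∈ r, ∀ k, T ℂ (G ℂ k) x = 0)
    (hS : ∀ i j, ⁅G ℂ i, G ℂ j⁆ ∈ r) {h : SL4 ℂ} (hh : ∀ y ∈ r, ⁅h, y⁆ ∈ r) (k : SoIdx) :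
    T ℂ (G ℂ k) h = 0 := by
  obtain ⟨j, hj, -⟩ := exists_ne2 k k
  have h1 := hr _ (hh _ (hS j k)) j
  rw [← lie_skew, map_neg, neg_eq_zero, ← T_lie, ← lie_skew, lie_lie_G] at h1
  have h2 := sgn_mul_sgn (K := ℂ) j
  simp only [eta, if_true, hj.symm, if_false, Int.cast_zero, mul_zero, zero_smul, zero_sub, neg_neg, map_smul,
    LinearMap.smul_apply, smul_eq_mul] at h1
  linear_combination (-(T ℂ (G ℂ k) h)) * h2 + (sgn j / 4 : ℂ) * h1

/-- The five-dimensional representation spanned by the `γ_k`, encoded as the trace-form orthogonal of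
the `⁅γ_i, γ_j⁆`, as a module over a subalgebra `H` of the complexified `𝔰𝔬(2,3)`. -/
noncomputable def vecSubmodule (H : LieSubalgebra ℂ (SL4 ℂ)) (hH : ∀ h ∈ H, ∀ k, T ℂ (G ℂ k) h = 0) :
    LieSubmodule ℂ H (SL4 ℂ) where
  carrier := {x | ∀ i j, T ℂ ⁅G ℂ i, G ℂ j⁆ x = 0}
  zero_mem' := fun i j => map_zero _
  add_mem' := fun {x y} hx hy i j => by rw [map_add, hx, hy, add_zero]
  smul_mem' := fun c x hx i j => by rw [map_smul, hx, smul_zero]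
  lie_mem := by
    rintro ⟨h, hh⟩ x hx i j
    obtain ⟨w, rfl⟩ := exists_eq_sum hx
    exact T_lie_G_lie_sum (hH h hh) w i j

/-- No Cartan subalgebra `H` of `𝔰𝔩(4,ℂ)` lies in the complexified `𝔰𝔬(2,3)`: the five-dimensional
representation would have zero as a weight, giving an element of the zero root space `H` of
`𝔰𝔩(4,ℂ)` that lies in the complement of `𝔰𝔬(2,3)`. -/
theorem not_cartan (H : LieSubalgebra ℂ (SL4 ℂ)) [H.IsCartanSubalgebra]
    (hH : ∀ h ∈ H, ∀ k, T ℂ (G ℂ k) h = 0) : False := by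
  let V := vecSubmodule H hH
  have hG : ∀ w : SoIdx → ℂ, ∑ l, w l • G ℂ l ∈ V := fun w i j => by
    simp only [map_sum, map_smul, T_comm _ (G ℂ _), T_G_lie, smul_zero, Finset.sum_const_zero]
  have hweight : ∃ χ : LieModule.Weight ℂ H V, χ.IsZero := by
    -- If no weight vanished identically, some `h` would avoid the zeros of the finitely many weights,
    -- contradicting the fact that every `h` has a nontrivial kernel.
    by_contra! hne
    obtain ⟨h, hχ⟩ := Module.Dual.exists_forall_ne_zero_of_forall_exists
      (fun χ : LieModule.Weight ℂ H V => χ.toLinear) (fun χ => by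
        by_contra! hc
        exact hne χ (funext hc))
    obtain ⟨w, hw, hhw⟩ := exists_lie_eq_zero (hH h h.2)
    let v : V := ⟨_, hG w⟩
    have hv : v ≠ 0 := fun hv => hw (eq_zero_of_sum (congrArg Subtype.val hv))
    have hvmem : v ∈ LieModule.genWeightSpaceOf V (0 : ℂ) h := by
      rw [LieModule.mem_genWeightSpaceOf]
      refine ⟨1, ?_⟩
      rw [zero_smul, sub_zero, pow_one]
      exact Subtype.ext hhw
    let N := LieModule.genWeightSpaceOf V (0 : ℂ) h
    have : Nontrivial N := ⟨⟨⟨v, hvmem⟩, 0, fun e => hv (congrArg Subtype.val e)⟩⟩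
    -- `H` stabilises the generalised kernel `N` of `h`, so it has a common eigenvector there.
    obtain ⟨χ, hχN⟩ := LieModule.exists_nontrivial_weightSpace_of_isNilpotent (k := ℂ) (L := H) (M := N)
    obtain ⟨u, hu⟩ := exists_ne (0 : LieModule.weightSpace N χ)
    have hu0 : ((u : N) : V) ≠ 0 := fun e => hu (Subtype.ext (Subtype.ext e))
    have huχ : ((u : N) : V) ∈ LieModule.genWeightSpace V χ := by
      refine LieModule.weightSpace_le_genWeightSpace V χ ((LieModule.mem_weightSpace _ _).mpr fun x => ?_)
      exact congrArg Subtype.val ((LieModule.mem_weightSpace _ _).mp u.2 x)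
    have hχ0 : χ h ≠ 0 := hχ ⟨χ, fun e => hu0 (by rw [e] at huχ; simpa using huχ)⟩
    have hdis := LieModule.disjoint_genWeightSpaceOf ℂ H V (x := h) hχ0
    have hinf := (LieSubmodule.mem_inf _ _ _).mpr
      ⟨LieModule.genWeightSpace_le_genWeightSpaceOf V h χ huχ, (u : N).2⟩
    rw [disjoint_iff.mp hdis] at hinf
    exact hu0 ((LieSubmodule.mem_bot _).mp hinf)
  obtain ⟨χ, hχ⟩ := hweight
  obtain ⟨v, hv, hv0⟩ := χ.exists_ne_zero
  rw [hχ] at hv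
  -- A Cartan subalgebra is its own zero root space, so `v` lies in `H`, hence in both summands.
  have h1 : (v : SL4 ℂ) ∈ LieAlgebra.rootSpace H (0 : H → ℂ) :=
    LieModule.map_genWeightSpace_le V.incl (LieSubmodule.mem_map_of_mem hv)
  rw [LieAlgebra.rootSpace_zero_eq] at h1
  exact hv0 (Subtype.ext (eq_zero_of_T (hH _ h1) v.2))

end SpinSO23

open SpinSO23

theorem so23_maximal_S_subalgebra_of_sl4 :
    ∃ φ : ↥(Orthogonal.so' (Fin 2) (Fin 3) ℝ) →ₗ⁅ℝ⁆ ↥(SpecialLinear.sl (Fin 4) ℝ),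
      Function.Injective φ ∧
      IsMaxSubalgebra φ.range ∧
      ¬ ∃ r : LieSubalgebra ℂ ↥(SpecialLinear.sl (Fin 4) ℂ),
          r.IsRegularSubalgebra ∧ r ≠ ⊤ ∧ complexifiedRange φ ≤ r := by
  refine ⟨spin, spin_injective, isMax_range, ?_⟩
  rintro ⟨r, ⟨H, hH, hHr⟩, hr, hle⟩
  have hS : ∀ i j, ⁅G ℂ i, G ℂ j⁆ ∈ r := fun i j => hle (lie_mem_complexifiedRange i j)
  have hr0 : ∀ x ∈ r, ∀ k, T ℂ (G ℂ k) x = 0 := fun x hx k => by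
    by_contra hk
    exact hr (eq_top_of_T_ne_zero hS hx hk)
  exact not_cartan H fun h hh => T_G_eq_zero_of_normalizes hr0 hS (hHr h hh)
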